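/- arXiv:2006.11789 — 9 statements merged into one kernel-verified Lean document; each statement's English description precedes it below -/
import Mathlib

section
/- Let σ₁, σ₂ be switching signals of length T+1 with σ₁ ⪯ σ₂. Suppose there exists t₁ ≤ T such that O_{σ₁}(t₁) has full column rank n, and let t_{σ₁} be the least such time. Then there exists t₂ ≤ t_{σ₁} such that O_{σ₂}(t₂) has full column rank n, and the least such time t_{σ₂} satisfies t_{σ₂} ≤ t_{σ₁}. (The first time at which the initial state can be estimated is antitone in the partial order on switching signals.) -/
open Matrix
open scoped Classical

/-- The observability matrix `O_σ(t)` of `(A, C)` under the (ℕ-indexed) switching signal `σ`: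
the `p(t+1) × n` matrix obtained by stacking the blocks `σ(0)C, σ(1)CA, …, σ(t)CAᵗ`. -/
def obsMatrixN {n p : ℕ} (A : Matrix (Fin n) (Fin n) ℝ) (C : Matrix (Fin p) (Fin n) ℝ)
    (σ : ℕ → ℝ) (t : ℕ) : Matrix (Fin (t + 1) × Fin p) (Fin n) ℝ :=
  Matrix.of fun ij k => σ (ij.1 : ℕ) * (C * A ^ (ij.1 : ℕ)) ij.2 k

/-!
Replacing `σ₂` by a smaller switching signal `σ₁` multiplies each row of the observability matrix
by a scalar (`0` where `σ₁` switches the output off, `1` elsewhere), so it cannot raise the rank.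
Hence `O_{σ₂}(t)` has full column rank whenever `O_{σ₁}(t)` has. For general weights such scalars
are the quotients witnessing `σ₂ i ∣ σ₁ i`, which is what `σ₁ i ≤ σ₂ i` says for values in `{0, 1}`.
-/

section RowMultiples

variable {R m n : Type*} [CommSemiring R] [StrongRankCondition R] [Finite m] [Fintype n]

theorem rank_le_rank_of_row_eq_smul {M N : Matrix m n R} (c : m → R)
    (h : ∀ i, M i = c i • N i) : M.rank ≤ N.rank := by
  cases nonempty_fintype m
  have hM : M = Matrix.diagonal c * N := by
    ext i j
    rw [Matrix.diagonal_mul, h i, Pi.smul_apply, smul_eq_mul]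
  exact hM ▸ Matrix.rank_mul_le_right _ N

end RowMultiples

/-- The observability matrix by time `t` of a time-varying system whose state-to-output map at
time `i` is `B i`, with output `i` weighted by `σ i`: the blocks `σ(0)B(0), …, σ(t)B(t)` stacked.
The system `(A, C)` is the case `B i = C * A ^ i`. -/
def weightedObsMatrix {R l n : Type*} [Mul R] (B : ℕ → Matrix l n R) (σ : ℕ → R) (t : ℕ) :
    Matrix (Fin (t + 1) × l) n R :=
  Matrix.of fun ij k => σ ij.1 * B ij.1 ij.2 k

section WeightedObsMatrix

variable {R l n : Type*} [CommSemiring R] [StrongRankCondition R] [Finite l] [Fintype n]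
  (B : ℕ → Matrix l n R)

theorem rank_weightedObsMatrix_le_of_dvd {σ₁ σ₂ : ℕ → R} {t : ℕ} (h : ∀ i ≤ t, σ₂ i ∣ σ₁ i) :
    (weightedObsMatrix B σ₁ t).rank ≤ (weightedObsMatrix B σ₂ t).rank := by
  choose c hc using fun i : Fin (t + 1) => h i (Nat.le_of_lt_succ i.isLt)
  refine rank_le_rank_of_row_eq_smul (fun ij => c ij.1) fun ij => ?_
  ext k
  simp only [weightedObsMatrix, Matrix.of_apply, Pi.smul_apply, smul_eq_mul, hc]
  ring

theorem rank_weightedObsMatrix_eq_card_of_dvd {σ₁ σ₂ : ℕ → R} {t : ℕ}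
    (h : ∀ i ≤ t, σ₂ i ∣ σ₁ i) (hrank : (weightedObsMatrix B σ₁ t).rank = Fintype.card n) :
    (weightedObsMatrix B σ₂ t).rank = Fintype.card n :=
  (Matrix.rank_le_card_width _).antisymm (hrank ▸ rank_weightedObsMatrix_le_of_dvd B h)

theorem estimation_time_antitone_general {T : ℕ} {σ₁ σ₂ : ℕ → R} (h : ∀ i ≤ T, σ₂ i ∣ σ₁ i)
    (hex₁ : ∃ t, t ≤ T ∧ (weightedObsMatrix B σ₁ t).rank = Fintype.card n) :
    ∃ hex₂ : ∃ t, t ≤ T ∧ (weightedObsMatrix B σ₂ t).rank = Fintype.card n,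
      Nat.find hex₂ ≤ Nat.find hex₁ := by
  have full_rank_mono : ∀ t, t ≤ T ∧ (weightedObsMatrix B σ₁ t).rank = Fintype.card n →
      t ≤ T ∧ (weightedObsMatrix B σ₂ t).rank = Fintype.card n := fun t ⟨ht, hrank⟩ =>
    ⟨ht, rank_weightedObsMatrix_eq_card_of_dvd B (fun i hi => h i (hi.trans ht)) hrank⟩
  exact ⟨hex₁.imp full_rank_mono, Nat.find_mono full_rank_mono⟩

end WeightedObsMatrix

theorem dvd_of_le_of_eq_zero_or_one {K : Type*} [GroupWithZero K] [PartialOrder K]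
    [ZeroLEOneClass K] {a b : K} (ha : a = 0 ∨ a = 1) (hab : a ≤ b) : b ∣ a := by
  rcases ha with rfl | rfl
  · exact dvd_zero b
  · exact (zero_lt_one.trans_le hab).ne'.isUnit.dvd

theorem obsMatrixN_eq_weightedObsMatrix {n p : ℕ} (A : Matrix (Fin n) (Fin n) ℝ)
    (C : Matrix (Fin p) (Fin n) ℝ) (σ : ℕ → ℝ) (t : ℕ) :
    obsMatrixN A C σ t = weightedObsMatrix (fun i => C * A ^ i) σ t :=
  rfl

/-- If `σ₁ ⪯ σ₂` (as switching signals of length `T+1`) and the initial state can be estimated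
under `σ₁` by some time `t₁ ≤ T` (i.e. `O_{σ₁}(t₁)` has full column rank `n`), then it can also
be estimated under `σ₂`, and the least estimation time satisfies `t_{σ₂} ≤ t_{σ₁}`. -/
theorem estimation_time_antitone {n p T : ℕ}
    (A : Matrix (Fin n) (Fin n) ℝ) (C : Matrix (Fin p) (Fin n) ℝ)
    (σ₁ σ₂ : ℕ → ℝ)
    (hσ₁ : ∀ i ≤ T, σ₁ i = 0 ∨ σ₁ i = 1) (hσ₂ : ∀ i ≤ T, σ₂ i = 0 ∨ σ₂ i = 1)
    (hle : ∀ i ≤ T, σ₁ i ≤ σ₂ i)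
    (hex₁ : ∃ t, t ≤ T ∧ (obsMatrixN A C σ₁ t).rank = n) :
    ∃ hex₂ : ∃ t, t ≤ T ∧ (obsMatrixN A C σ₂ t).rank = n,
      Nat.find hex₂ ≤ Nat.find hex₁ := by
  have hdvd : ∀ i ≤ T, σ₂ i ∣ σ₁ i := fun i hi =>
    dvd_of_le_of_eq_zero_or_one (hσ₁ i hi) (hle i hi)
  simp only [obsMatrixN_eq_weightedObsMatrix] at hex₁ ⊢
  simpa only [Fintype.card_fin] using
    estimation_time_antitone_general (fun i => C * A ^ i) hdvd
      (by simpa only [Fintype.card_fin] using hex₁)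
end

section
/- Let σ₁, σ₂ be switching signals of length T+1 with σ₁ ⪯ σ₂, and let x(0) ∈ ℝⁿ. Suppose there exist t₁ ≤ T and an input sequence u(0),…,u(t₁) with ‖u(i)‖_∞ ≤ 1 for all i such that A^{t₁+1}x(0) + Σ_{i=0}^{t₁} σ₁(i) A^{t₁−i} B u(i) = 0, and let t_{σ₁} be the least such time. Then the origin can be reached from x(0) under σ₂ by some time t ≤ t_{σ₁} with an input satisfying the same bound ‖u(i)‖_∞ ≤ 1, i.e., the optimal transfer time satisfies t_{σ₂} ≤ t_{σ₁}. -/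
/-!
A linear map does not distinguish an input `u i` switched by `σ i` from the effective input
`σ i • u i`, so `σ` enters only through the set of admissible effective inputs at time `i`, the
scaled ball `σ i • closedBall 0 1`. Balls are balanced, hence these sets grow with `|σ i|`: every
transfer under the smaller signal is a transfer under the larger one with the same effective
inputs and the same arrival time.
-/

open Matrix
open scoped Classical

/-- `steersToZero A B σ x₀ t` says that there is an input sequence `u(0), …, u(t)` with
`‖u(i)‖_∞ ≤ 1` driving the state from `x₀` to the origin at time `t+1` under the switching
signal `σ`, i.e. `A^{t+1} x₀ + Σ_{i=0}^{t} σ(i) A^{t-i} B u(i) = 0`. -/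
def steersToZero {n m : ℕ} (A : Matrix (Fin n) (Fin n) ℝ) (B : Matrix (Fin n) (Fin m) ℝ)
    (σ : ℕ → ℝ) (x₀ : Fin n → ℝ) (t : ℕ) : Prop :=
  ∃ u : Fin (t + 1) → Fin m → ℝ, (∀ i j, |u i j| ≤ 1) ∧
    (A ^ (t + 1)) *ᵥ x₀ + ∑ i : Fin (t + 1), σ (i : ℕ) • ((A ^ (t - (i : ℕ)) * B) *ᵥ u i) = 0

section Transfer

variable {n m T : ℕ} {A : Matrix (Fin n) (Fin n) ℝ} {B : Matrix (Fin n) (Fin m) ℝ}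
  {σ σ₁ σ₂ : ℕ → ℝ} {x₀ : Fin n → ℝ} {t : ℕ}

open Metric
open scoped Pointwise

theorem steersToZero_iff_exists_mem_smul_closedBall :
    steersToZero A B σ x₀ t ↔
      ∃ v : Fin (t + 1) → Fin m → ℝ,
        (∀ i : Fin (t + 1), v i ∈ σ i • closedBall (0 : Fin m → ℝ) 1) ∧
        (A ^ (t + 1)) *ᵥ x₀ + ∑ i : Fin (t + 1), (A ^ (t - (i : ℕ)) * B) *ᵥ v i = 0 := by
  have mem_closedBall_iff (w : Fin m → ℝ) : w ∈ closedBall 0 1 ↔ ∀ j, |w j| ≤ 1 := by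
    simp [pi_norm_le_iff_of_nonneg]
  constructor
  · rintro ⟨u, hu, hzero⟩
    refine ⟨fun i => σ i • u i,
      fun i => Set.smul_mem_smul_set ((mem_closedBall_iff _).2 (hu i)), ?_⟩
    simpa only [mulVec_smul] using hzero
  · rintro ⟨v, hv, hzero⟩
    choose u hu huv using fun i => Set.mem_smul_set.1 (hv i)
    refine ⟨u, fun i => (mem_closedBall_iff _).1 (hu i), ?_⟩
    simpa only [← mulVec_smul, huv] using hzero

theorem steersToZero.of_abs_le (h : steersToZero A B σ₁ x₀ t)
    (hσ : ∀ i ≤ t, |σ₁ i| ≤ |σ₂ i|) : steersToZero A B σ₂ x₀ t := by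
  rw [steersToZero_iff_exists_mem_smul_closedBall] at h ⊢
  obtain ⟨v, hv, hzero⟩ := h
  have smul_ball_subset (i : Fin (t + 1)) :
      σ₁ i • closedBall (0 : Fin m → ℝ) 1 ⊆ σ₂ i • closedBall (0 : Fin m → ℝ) 1 :=
    balanced_closedBall_zero.smul_mono (hσ i i.is_le)
  exact ⟨v, fun i => smul_ball_subset i (hv i), hzero⟩

theorem transfer_time_antitone_general (hσ : ∀ i ≤ T, |σ₁ i| ≤ |σ₂ i|)
    (hex₁ : ∃ t, t ≤ T ∧ steersToZero A B σ₁ x₀ t) :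
    ∃ hex₂ : ∃ t, t ≤ T ∧ steersToZero A B σ₂ x₀ t, Nat.find hex₂ ≤ Nat.find hex₁ := by
  have transfer (t : ℕ) (h : t ≤ T ∧ steersToZero A B σ₁ x₀ t) :
      t ≤ T ∧ steersToZero A B σ₂ x₀ t :=
    ⟨h.1, h.2.of_abs_le fun i hi => hσ i (hi.trans h.1)⟩
  exact ⟨hex₁.imp transfer, Nat.find_mono transfer⟩

end Transfer

/-- If `σ₁ ⪯ σ₂` (as switching signals of length `T+1`) and the state can be driven from `x₀`
to the origin under `σ₁` by some time `t₁ ≤ T` using inputs with `‖u(i)‖_∞ ≤ 1`, then the same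
is possible under `σ₂`, and the optimal transfer time satisfies `t_{σ₂} ≤ t_{σ₁}`. -/
theorem transfer_time_antitone {n m T : ℕ}
    (A : Matrix (Fin n) (Fin n) ℝ) (B : Matrix (Fin n) (Fin m) ℝ)
    (σ₁ σ₂ : ℕ → ℝ)
    (hσ₁ : ∀ i ≤ T, σ₁ i = 0 ∨ σ₁ i = 1) (hσ₂ : ∀ i ≤ T, σ₂ i = 0 ∨ σ₂ i = 1)
    (hle : ∀ i ≤ T, σ₁ i ≤ σ₂ i)
    (x₀ : Fin n → ℝ)
    (hex₁ : ∃ t, t ≤ T ∧ steersToZero A B σ₁ x₀ t) :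
    ∃ hex₂ : ∃ t, t ≤ T ∧ steersToZero A B σ₂ x₀ t,
      Nat.find hex₂ ≤ Nat.find hex₁ := by
  have hσ₁_nonneg : ∀ i ≤ T, 0 ≤ σ₁ i := fun i hi =>
    (hσ₁ i hi).elim (fun h => h.ge) fun h => h ▸ zero_le_one
  exact transfer_time_antitone_general
    (fun i hi => abs_le_abs_of_nonneg (hσ₁_nonneg i hi) (hle i hi)) hex₁
end

section
/- Let σ₁, σ₂ be switching signals of length t+1 with σ₁ ⪯ σ₂, and let x_f ∈ ℝⁿ. If the set U₁ = {ū = (u(0),…,u(t)) : x_f = Σ_{i=0}^{t} σ₁(i) A^{t−i} B u(i)} is nonempty, then the set U₂ defined analogously for σ₂ is nonempty and inf_{ū ∈ U₂} ‖ū‖₁ ≤ inf_{ū ∈ U₁} ‖ū‖₁, where ‖ū‖₁ = Σ_{i=0}^{t} Σ_{j=1}^{m} |u_j(i)| is the total fuel. (The minimum fuel required for a state transfer is antitone in the partial order on switching signals.) -/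
open Matrix

/-- The state `Σ_{i=0}^{t} σ(i) A^{t-i} B u(i)` reached from the origin at time `t+1`
under the switching signal `σ` with input sequence `u(0), …, u(t)`. -/
def reachState {n m t : ℕ} (A : Matrix (Fin n) (Fin n) ℝ) (B : Matrix (Fin n) (Fin m) ℝ)
    (σ : Fin (t + 1) → ℝ) (u : Fin (t + 1) → Fin m → ℝ) : Fin n → ℝ :=
  ∑ i : Fin (t + 1), σ i • ((A ^ (t - (i : ℕ)) * B) *ᵥ u i)

/-!
Any input `u` admissible under the smaller signal becomes admissible under the larger one after
rescaling each `u i` by a factor `c i` with `σ₂ i * c i = σ₁ i`: the factor is moved between the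
signal and the input by linearity. Since `|σ₁ i| ≤ |σ₂ i|`, it can be chosen with `|c i| ≤ 1`,
so the rescaling does not increase the fuel. For 0/1 signals, it switches off the inputs which `σ₁`
ignores.
-/

theorem exists_norm_le_one_mul_eq {𝕜 : Type*} [NormedDivisionRing 𝕜] {a b : 𝕜}
    (h : ‖a‖ ≤ ‖b‖) : ∃ c : 𝕜, ‖c‖ ≤ 1 ∧ b * c = a := by
  rcases eq_or_ne b 0 with rfl | hb
  · exact ⟨0, by simp, by simpa [eq_comm] using h⟩
  · refine ⟨b⁻¹ * a, ?_, mul_inv_cancel_left₀ hb a⟩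
    rw [norm_mul, norm_inv]
    exact inv_mul_le_one_of_le₀ h (norm_nonneg b)

section SteeredState

variable {ι R E F : Type*} [Fintype ι] [Semiring R] [AddCommMonoid E] [Module R E]
  [AddCommMonoid F] [Module R F]

/-- The state reached from the origin when the input `u i` acts through the linear map `L i`,
modulated by the signal `σ`. The signal may take any scalar values, not only `0` and `1`. -/
def steeredState (L : ι → E →ₗ[R] F) (σ : ι → R) (u : ι → E) : F :=
  ∑ i, σ i • L i (u i)

/-- The inputs that steer the origin to `x` under the signal `σ`. -/
def feasibleInputs (L : ι → E →ₗ[R] F) (σ : ι → R) (x : F) : Set (ι → E) :=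
  {u | steeredState L σ u = x}

theorem steeredState_smul (L : ι → E →ₗ[R] F) (σ c : ι → R) (u : ι → E) :
    steeredState L σ (fun i ↦ c i • u i) = steeredState L (fun i ↦ σ i * c i) u := by
  simp only [steeredState, map_smul, mul_smul]

end SteeredState

section Fuel

variable {ι 𝕜 E : Type*} [Fintype ι]

section SeminormedRing

variable [SeminormedRing 𝕜] [AddCommGroup E] [Module 𝕜 E]

/-- The total fuel of an input sequence, where `p i` measures the cost of the input `u i`. -/
def fuel (p : ι → Seminorm 𝕜 E) (u : ι → E) : ℝ :=
  ∑ i, p i (u i)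

theorem fuel_nonneg (p : ι → Seminorm 𝕜 E) (u : ι → E) : 0 ≤ fuel p u :=
  Finset.sum_nonneg fun i _ ↦ apply_nonneg (p i) (u i)

theorem fuel_smul_le (p : ι → Seminorm 𝕜 E) {c : ι → 𝕜} (hc : ∀ i, ‖c i‖ ≤ 1) (u : ι → E) :
    fuel p (fun i ↦ c i • u i) ≤ fuel p u := by
  refine Finset.sum_le_sum fun i _ ↦ ?_
  rw [map_smul_eq_mul]
  exact mul_le_of_le_one_left (apply_nonneg (p i) (u i)) (hc i)

end SeminormedRing

variable [NormedDivisionRing 𝕜] [AddCommGroup E] [Module 𝕜 E]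
  {F : Type*} [AddCommMonoid F] [Module 𝕜 F]

theorem exists_mem_feasibleInputs_fuel_le (L : ι → E →ₗ[𝕜] F) (p : ι → Seminorm 𝕜 E)
    {σ₁ σ₂ : ι → 𝕜} (hle : ∀ i, ‖σ₁ i‖ ≤ ‖σ₂ i‖) {x : F} {u : ι → E}
    (hu : u ∈ feasibleInputs L σ₁ x) :
    ∃ v ∈ feasibleInputs L σ₂ x, fuel p v ≤ fuel p u := by
  choose c hc hσ using fun i ↦ exists_norm_le_one_mul_eq (hle i)
  refine ⟨fun i ↦ c i • u i, ?_, fuel_smul_le p hc u⟩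
  calc steeredState L σ₂ (fun i ↦ c i • u i)
      = steeredState L (fun i ↦ σ₂ i * c i) u := steeredState_smul L σ₂ c u
    _ = steeredState L σ₁ u := by rw [funext hσ]
    _ = x := hu

theorem min_fuel_antitone_general (L : ι → E →ₗ[𝕜] F) (p : ι → Seminorm 𝕜 E)
    {σ₁ σ₂ : ι → 𝕜} (hle : ∀ i, ‖σ₁ i‖ ≤ ‖σ₂ i‖) {x : F}
    (hfeas : (feasibleInputs L σ₁ x).Nonempty) :
    (feasibleInputs L σ₂ x).Nonempty ∧
      sInf (fuel p '' feasibleInputs L σ₂ x) ≤ sInf (fuel p '' feasibleInputs L σ₁ x) := by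
  constructor
  · obtain ⟨u, hu⟩ := hfeas
    obtain ⟨v, hv, -⟩ := exists_mem_feasibleInputs_fuel_le L p hle hu
    exact ⟨v, hv⟩
  · have hbdd : BddBelow (fuel p '' feasibleInputs L σ₂ x) :=
      ⟨0, Set.forall_mem_image.2 fun v _ ↦ fuel_nonneg p v⟩
    refine le_csInf (hfeas.image _) (Set.forall_mem_image.2 fun u hu ↦ ?_)
    obtain ⟨v, hv, hvu⟩ := exists_mem_feasibleInputs_fuel_le L p hle hu
    exact (csInf_le hbdd (Set.mem_image_of_mem _ hv)).trans hvu

end Fuel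

/-- The `ℓ¹` norm as a seminorm on the plain function space `κ → 𝕜`, whose own norm is the sup
norm. It is the cost of a single input in the fuel of a control sequence. -/
noncomputable def l1Seminorm (𝕜 κ : Type*) [NormedField 𝕜] [Fintype κ] : Seminorm 𝕜 (κ → 𝕜) :=
  (normSeminorm 𝕜 (PiLp 1 fun _ : κ ↦ 𝕜)).comp (WithLp.linearEquiv 1 𝕜 (κ → 𝕜)).symm.toLinearMap

theorem l1Seminorm_apply {𝕜 κ : Type*} [NormedField 𝕜] [Fintype κ] (v : κ → 𝕜) :
    l1Seminorm 𝕜 κ v = ∑ j, ‖v j‖ :=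
  PiLp.norm_eq_of_L1 _

section LinearSystem

variable {n m t : ℕ} (A : Matrix (Fin n) (Fin n) ℝ) (B : Matrix (Fin n) (Fin m) ℝ)

/-- The linear map carrying the input at time `i` to its contribution to the state at time `t + 1`.
The subtraction `t - i` does not truncate, as `i ≤ t`. -/
def inputToState (i : Fin (t + 1)) : (Fin m → ℝ) →ₗ[ℝ] Fin n → ℝ :=
  (A ^ (t - (i : ℕ)) * B).mulVecLin

theorem mem_feasibleInputs_inputToState {σ : Fin (t + 1) → ℝ} {xf : Fin n → ℝ}
    {u : Fin (t + 1) → Fin m → ℝ} :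
    u ∈ feasibleInputs (inputToState A B) σ xf ↔ reachState A B σ u = xf :=
  Iff.rfl

theorem fuel_l1Seminorm_image_feasibleInputs (σ : Fin (t + 1) → ℝ) (xf : Fin n → ℝ) :
    fuel (fun _ ↦ l1Seminorm ℝ (Fin m)) '' feasibleInputs (inputToState A B) σ xf =
      {r : ℝ | ∃ u : Fin (t + 1) → Fin m → ℝ,
        reachState A B σ u = xf ∧ r = ∑ i : Fin (t + 1), ∑ j : Fin m, |u i j|} := by
  ext r
  simp only [Set.mem_image, Set.mem_ofPred_eq, mem_feasibleInputs_inputToState, fuel,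
    l1Seminorm_apply, Real.norm_eq_abs, eq_comm (a := r)]

end LinearSystem

/-- If `σ₁ ⪯ σ₂` and the state transfer from the origin to `x_f` at time `t+1` is feasible
under `σ₁`, then it is feasible under `σ₂` and the minimum fuel (the infimum of the ℓ¹-norms
of feasible stacked inputs) under `σ₂` is at most that under `σ₁`. -/
theorem min_fuel_antitone {n m t : ℕ}
    (A : Matrix (Fin n) (Fin n) ℝ) (B : Matrix (Fin n) (Fin m) ℝ)
    (σ₁ σ₂ : Fin (t + 1) → ℝ)
    (hσ₁ : ∀ i, σ₁ i = 0 ∨ σ₁ i = 1) (hσ₂ : ∀ i, σ₂ i = 0 ∨ σ₂ i = 1)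
    (hle : ∀ i, σ₁ i ≤ σ₂ i)
    (xf : Fin n → ℝ)
    (hfeas : ∃ u : Fin (t + 1) → Fin m → ℝ, reachState A B σ₁ u = xf) :
    (∃ u : Fin (t + 1) → Fin m → ℝ, reachState A B σ₂ u = xf) ∧
      sInf {r : ℝ | ∃ u : Fin (t + 1) → Fin m → ℝ,
          reachState A B σ₂ u = xf ∧ r = ∑ i : Fin (t + 1), ∑ j : Fin m, |u i j|} ≤
        sInf {r : ℝ | ∃ u : Fin (t + 1) → Fin m → ℝ,
          reachState A B σ₁ u = xf ∧ r = ∑ i : Fin (t + 1), ∑ j : Fin m, |u i j|} := by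
  have hnorm : ∀ i, ‖σ₁ i‖ ≤ ‖σ₂ i‖ := fun i ↦
    abs_le_abs_of_nonneg (by rcases hσ₁ i with h | h <;> simp [h]) (hle i)
  simp only [← fuel_l1Seminorm_image_feasibleInputs]
  exact min_fuel_antitone_general (inputToState A B) (fun _ ↦ l1Seminorm ℝ (Fin m)) hnorm hfeas
end

section
/- Let σ₁, σ₂ be switching signals of length t+1 with σ₁ ⪯ σ₂, let x_f ∈ ℝⁿ, and let γ₁, γ₂ ≥ 0. If the set U₁ = {ū = (u(0),…,u(t)) : x_f = Σ_{i=0}^{t} σ₁(i) A^{t−i} B u(i)} is nonempty, then the analogous set U₂ for σ₂ is nonempty and inf_{ū ∈ U₂} (γ₁‖ū‖₁ + γ₂‖ū‖₂) ≤ inf_{ū ∈ U₁} (γ₁‖ū‖₁ + γ₂‖ū‖₂). (The optimal mixed fuel–energy cost is antitone in the partial order on switching signals.) -/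
/-!
An input that steers the origin to `x_f` under `σ₁` is turned into one that does so under `σ₂` by
multiplying its `i`-th entry by `σ₁ i / σ₂ i`. When `|σ₁ i| ≤ |σ₂ i|` this shrinks every coordinate
in absolute value, and the cost is monotone in the absolute values of the coordinates. For
`{0, 1}`-valued signals the rescaling simply switches the input off wherever `σ₁` vanishes.
-/

open Matrix

/-- The mixed fuel–energy cost `γ₁‖ū‖₁ + γ₂‖ū‖₂` of the stacked input `ū = (u(0),…,u(t))`. -/
noncomputable def mixedCost {m t : ℕ} (γ₁ γ₂ : ℝ) (u : Fin (t + 1) → Fin m → ℝ) : ℝ :=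
  γ₁ * (∑ i : Fin (t + 1), ∑ j : Fin m, |u i j|) +
    γ₂ * Real.sqrt (∑ i : Fin (t + 1), ∑ j : Fin m, (u i j) ^ 2)

section Inputs

variable {n m t : ℕ} (A : Matrix (Fin n) (Fin n) ℝ) (B : Matrix (Fin n) (Fin m) ℝ)
  {σ₁ σ₂ : Fin (t + 1) → ℝ} {γ₁ γ₂ : ℝ} {u v : Fin (t + 1) → Fin m → ℝ}

theorem reachState_smul_input (σ c : Fin (t + 1) → ℝ) (u : Fin (t + 1) → Fin m → ℝ) :
    reachState A B σ (fun i => c i • u i) = reachState A B (fun i => σ i * c i) u := by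
  simp only [reachState, mulVec_smul, smul_smul]

theorem exists_reachState_eq_of_abs_le (hσ : ∀ i, |σ₁ i| ≤ |σ₂ i|)
    (u : Fin (t + 1) → Fin m → ℝ) :
    ∃ v, reachState A B σ₂ v = reachState A B σ₁ u ∧ ∀ i j, |v i j| ≤ |u i j| := by
  refine ⟨fun i => (σ₁ i / σ₂ i) • u i, ?_, fun i j => ?_⟩
  · have vanishes (i) (h : σ₂ i = 0) : σ₁ i = 0 := by simpa [h] using hσ i
    have cancel (i) : σ₂ i * (σ₁ i / σ₂ i) = σ₁ i := mul_div_cancel_of_imp' (vanishes i)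
    simp only [reachState_smul_input, cancel]
  · have ratio_le_one : |σ₁ i / σ₂ i| ≤ 1 := by
      rw [abs_div]
      exact div_le_one_of_le₀ (hσ i) (abs_nonneg _)
    calc |((σ₁ i / σ₂ i) • u i) j| = |σ₁ i / σ₂ i| * |u i j| := abs_mul _ _
      _ ≤ |u i j| := mul_le_of_le_one_left (abs_nonneg _) ratio_le_one

theorem mixedCost_nonneg (hγ₁ : 0 ≤ γ₁) (hγ₂ : 0 ≤ γ₂) (u : Fin (t + 1) → Fin m → ℝ) :
    0 ≤ mixedCost γ₁ γ₂ u := by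
  unfold mixedCost
  positivity

theorem mixedCost_le_of_abs_le (hγ₁ : 0 ≤ γ₁) (hγ₂ : 0 ≤ γ₂) (h : ∀ i j, |v i j| ≤ |u i j|) :
    mixedCost γ₁ γ₂ v ≤ mixedCost γ₁ γ₂ u := by
  have h_sq (i j) : v i j ^ 2 ≤ u i j ^ 2 := sq_le_sq.mpr (h i j)
  unfold mixedCost
  gcongr γ₁ * ∑ i, ∑ j, ?_ + γ₂ * √(∑ i, ∑ j, ?_) with i _ j _ i _ j _
  · exact h i j
  · exact h_sq i j

end Inputs

theorem mixed_fuel_energy_antitone_general {n m t : ℕ}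
    (A : Matrix (Fin n) (Fin n) ℝ) (B : Matrix (Fin n) (Fin m) ℝ)
    (σ₁ σ₂ : Fin (t + 1) → ℝ) (hσ : ∀ i, |σ₁ i| ≤ |σ₂ i|)
    (xf : Fin n → ℝ) (γ₁ γ₂ : ℝ) (hγ₁ : 0 ≤ γ₁) (hγ₂ : 0 ≤ γ₂)
    (hfeas : ∃ u : Fin (t + 1) → Fin m → ℝ, reachState A B σ₁ u = xf) :
    (∃ u : Fin (t + 1) → Fin m → ℝ, reachState A B σ₂ u = xf) ∧
      sInf {r : ℝ | ∃ u : Fin (t + 1) → Fin m → ℝ,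
          reachState A B σ₂ u = xf ∧ r = mixedCost γ₁ γ₂ u} ≤
        sInf {r : ℝ | ∃ u : Fin (t + 1) → Fin m → ℝ,
          reachState A B σ₁ u = xf ∧ r = mixedCost γ₁ γ₂ u} := by
  obtain ⟨u₀, hu₀⟩ := hfeas
  choose rescale reach_rescale abs_rescale_le using
    exists_reachState_eq_of_abs_le A B hσ
  have bddBelow_costs : BddBelow {r : ℝ | ∃ u : Fin (t + 1) → Fin m → ℝ,
      reachState A B σ₂ u = xf ∧ r = mixedCost γ₁ γ₂ u} := by
    refine ⟨0, ?_⟩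
    rintro _ ⟨u, -, rfl⟩
    exact mixedCost_nonneg hγ₁ hγ₂ u
  refine ⟨⟨rescale u₀, (reach_rescale u₀).trans hu₀⟩, le_csInf ⟨_, u₀, hu₀, rfl⟩ ?_⟩
  rintro _ ⟨u, hu, rfl⟩
  exact (csInf_le bddBelow_costs ⟨rescale u, (reach_rescale u).trans hu, rfl⟩).trans
    (mixedCost_le_of_abs_le hγ₁ hγ₂ (abs_rescale_le u))

/-- If `σ₁ ⪯ σ₂` and the state transfer from the origin to `x_f` at time `t+1` is feasible
under `σ₁`, then it is feasible under `σ₂` and the optimal mixed fuel–energy cost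
`γ₁‖ū‖₁ + γ₂‖ū‖₂` under `σ₂` is at most that under `σ₁`. -/
theorem mixed_fuel_energy_antitone {n m t : ℕ}
    (A : Matrix (Fin n) (Fin n) ℝ) (B : Matrix (Fin n) (Fin m) ℝ)
    (σ₁ σ₂ : Fin (t + 1) → ℝ)
    (hσ₁ : ∀ i, σ₁ i = 0 ∨ σ₁ i = 1) (hσ₂ : ∀ i, σ₂ i = 0 ∨ σ₂ i = 1)
    (hle : ∀ i, σ₁ i ≤ σ₂ i)
    (xf : Fin n → ℝ) (γ₁ γ₂ : ℝ) (hγ₁ : 0 ≤ γ₁) (hγ₂ : 0 ≤ γ₂)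
    (hfeas : ∃ u : Fin (t + 1) → Fin m → ℝ, reachState A B σ₁ u = xf) :
    (∃ u : Fin (t + 1) → Fin m → ℝ, reachState A B σ₂ u = xf) ∧
      sInf {r : ℝ | ∃ u : Fin (t + 1) → Fin m → ℝ,
          reachState A B σ₂ u = xf ∧ r = mixedCost γ₁ γ₂ u} ≤
        sInf {r : ℝ | ∃ u : Fin (t + 1) → Fin m → ℝ,
          reachState A B σ₁ u = xf ∧ r = mixedCost γ₁ γ₂ u} := by
  have hσ (i) : |σ₁ i| ≤ |σ₂ i| :=
    abs_le_abs_of_nonneg ((hσ₁ i).elim Eq.ge (· ▸ zero_le_one)) (hle i)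
  exact mixed_fuel_energy_antitone_general A B σ₁ σ₂ hσ xf γ₁ γ₂ hγ₁ hγ₂ hfeas
end

section
/- Let σ₁, σ₂ be switching signals of length t+1 with σ₁ ⪯ σ₂, and suppose the Gramians W_{σ₁}(t) and W_{σ₂}(t) are both positive definite (hence invertible). Then the ellipsoid E₁ = {x ∈ ℝⁿ : xᵀ W_{σ₁}(t)⁻¹ x ≤ 1} is contained in the ellipsoid E₂ = {x ∈ ℝⁿ : xᵀ W_{σ₂}(t)⁻¹ x ≤ 1}. (The unit-energy reachable ellipsoid grows with the switching signal in the partial order.) -/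
open Matrix

/-- The controllability Gramian `W_σ(t) = Σ_{i=0}^{t} σ(i) A^{t-i} B Bᵀ (Aᵀ)^{t-i}`
of the pair `(A, B)` under the switching signal `σ`. -/
def gramian {n m t : ℕ} (A : Matrix (Fin n) (Fin n) ℝ) (B : Matrix (Fin n) (Fin m) ℝ)
    (σ : Fin (t + 1) → ℝ) : Matrix (Fin n) (Fin n) ℝ :=
  ∑ i : Fin (t + 1), σ i • (A ^ (t - (i : ℕ)) * B * Bᵀ * (Aᵀ) ^ (t - (i : ℕ)))

/-! The Loewner order on Gramians is monotone in the signal, since each summand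
`A^k B Bᵀ (Aᵀ)^k` is positive semidefinite. Inversion reverses the order on positive definite
matrices: expanding the right-hand side verifies
`P⁻¹ - Q⁻¹ = (P⁻¹ - Q⁻¹) P (P⁻¹ - Q⁻¹) + Q⁻¹ (Q - P) Q⁻¹`,
a sum of two congruences of positive semidefinite matrices when `P` and `Q - P` are such. So the
quadratic form of the inverse Gramian decreases, and its unit sublevel set grows, with the
signal. -/

theorem units_inv_sub_inv_eq_add {R : Type*} [Ring R] (p q : Rˣ) :
    (↑p⁻¹ - ↑q⁻¹ : R) =
      (↑p⁻¹ - ↑q⁻¹) * p * (↑p⁻¹ - ↑q⁻¹) + ↑q⁻¹ * (q - p) * ↑q⁻¹ := by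
  simp only [sub_mul, mul_sub, Units.inv_mul, Units.mul_inv_cancel_right, one_mul]
  abel

section Loewner

variable {ι R : Type*} [Fintype ι]

theorem dotProduct_mulVec_le_of_posSemidef_sub [Ring R] [PartialOrder R] [StarRing R]
    [AddLeftMono R] {M N : Matrix ι ι R} (h : (N - M).PosSemidef) (x : ι → R) :
    star x ⬝ᵥ (M *ᵥ x) ≤ star x ⬝ᵥ (N *ᵥ x) := by
  have hx : 0 ≤ star x ⬝ᵥ ((N - M) *ᵥ x) := h.dotProduct_mulVec_nonneg x
  rwa [sub_mulVec, dotProduct_sub, sub_nonneg] at hx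

theorem posSemidef_inv_sub_inv [DecidableEq ι] [CommRing R] [PartialOrder R] [StarRing R]
    [AddLeftMono R] {P Q : Matrix ι ι R} (hP : P.PosSemidef) (hPu : IsUnit P) (hQu : IsUnit Q)
    (h : (Q - P).PosSemidef) : (P⁻¹ - Q⁻¹).PosSemidef := by
  have hQ : Q.IsHermitian := by simpa using h.isHermitian.add hP.isHermitian
  have hQinv : (Q⁻¹)ᴴ = Q⁻¹ := hQ.inv
  have hdiff : (P⁻¹ - Q⁻¹)ᴴ = P⁻¹ - Q⁻¹ := hP.isHermitian.inv.sub hQ.inv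
  have hdecomp : P⁻¹ - Q⁻¹ = (P⁻¹ - Q⁻¹) * P * (P⁻¹ - Q⁻¹)ᴴ + Q⁻¹ * (Q - P) * (Q⁻¹)ᴴ := by
    rw [hQinv, hdiff]
    lift P to (Matrix ι ι R)ˣ using hPu
    lift Q to (Matrix ι ι R)ˣ using hQu
    simpa only [coe_units_inv] using units_inv_sub_inv_eq_add P Q
  rw [hdecomp]
  exact (hP.mul_mul_conjTranspose_same _).add (h.mul_mul_conjTranspose_same _)

theorem posSemidef_pow_mul_mul_conjTranspose_mul_pow {κ : Type*} [Fintype κ] [DecidableEq ι]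
    [Ring R] [PartialOrder R] [StarRing R] [StarOrderedRing R] (A : Matrix ι ι R)
    (B : Matrix ι κ R) (k : ℕ) : (A ^ k * B * Bᴴ * Aᴴ ^ k).PosSemidef := by
  simpa only [conjTranspose_mul, conjTranspose_pow, Matrix.mul_assoc] using
    posSemidef_self_mul_conjTranspose (A ^ k * B)

end Loewner

section Gramian

variable {n m t : ℕ} (A : Matrix (Fin n) (Fin n) ℝ) (B : Matrix (Fin n) (Fin m) ℝ)

theorem gramian_sub (σ₁ σ₂ : Fin (t + 1) → ℝ) :
    gramian A B (σ₁ - σ₂) = gramian A B σ₁ - gramian A B σ₂ := by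
  simp only [gramian, Pi.sub_apply, sub_smul, Finset.sum_sub_distrib]

theorem posSemidef_gramian {σ : Fin (t + 1) → ℝ} (hσ : 0 ≤ σ) : (gramian A B σ).PosSemidef := by
  refine posSemidef_sum _ fun i _ => PosSemidef.smul ?_ (hσ i)
  simpa only [conjTranspose_eq_transpose_of_trivial] using
    posSemidef_pow_mul_mul_conjTranspose_mul_pow A B (t - i)

theorem posSemidef_gramian_sub_gramian {σ₁ σ₂ : Fin (t + 1) → ℝ} (hle : σ₁ ≤ σ₂) :
    (gramian A B σ₂ - gramian A B σ₁).PosSemidef :=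
  gramian_sub A B σ₂ σ₁ ▸ posSemidef_gramian A B (sub_nonneg.2 hle)

theorem reachable_ellipsoid_mono_general {σ₁ σ₂ : Fin (t + 1) → ℝ} (hle : σ₁ ≤ σ₂)
    (hW₁ : (gramian A B σ₁).PosDef) :
    {x : Fin n → ℝ | x ⬝ᵥ ((gramian A B σ₁)⁻¹ *ᵥ x) ≤ 1} ⊆
      {x : Fin n → ℝ | x ⬝ᵥ ((gramian A B σ₂)⁻¹ *ᵥ x) ≤ 1} := by
  intro x hx
  have hsub : (gramian A B σ₂ - gramian A B σ₁).PosSemidef :=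
    posSemidef_gramian_sub_gramian A B hle
  have hW₂ : (gramian A B σ₂).PosDef := by simpa using hW₁.add_posSemidef hsub
  have hinv : ((gramian A B σ₁)⁻¹ - (gramian A B σ₂)⁻¹).PosSemidef :=
    posSemidef_inv_sub_inv hW₁.posSemidef hW₁.isUnit hW₂.isUnit hsub
  exact (dotProduct_mulVec_le_of_posSemidef_sub hinv x).trans hx

end Gramian

/-- If `σ₁ ⪯ σ₂` and the Gramians `W_{σ₁}(t)`, `W_{σ₂}(t)` are positive definite, then the
unit-energy reachable ellipsoid `{x : xᵀ W_{σ₁}(t)⁻¹ x ≤ 1}` is contained in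
`{x : xᵀ W_{σ₂}(t)⁻¹ x ≤ 1}`. -/
theorem reachable_ellipsoid_mono {n m t : ℕ}
    (A : Matrix (Fin n) (Fin n) ℝ) (B : Matrix (Fin n) (Fin m) ℝ)
    (σ₁ σ₂ : Fin (t + 1) → ℝ)
    (hσ₁ : ∀ i, σ₁ i = 0 ∨ σ₁ i = 1) (hσ₂ : ∀ i, σ₂ i = 0 ∨ σ₂ i = 1)
    (hle : ∀ i, σ₁ i ≤ σ₂ i)
    (hW₁ : (gramian A B σ₁).PosDef) (hW₂ : (gramian A B σ₂).PosDef) :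
    {x : Fin n → ℝ | x ⬝ᵥ ((gramian A B σ₁)⁻¹ *ᵥ x) ≤ 1} ⊆
      {x : Fin n → ℝ | x ⬝ᵥ ((gramian A B σ₂)⁻¹ *ᵥ x) ≤ 1} :=
  reachable_ellipsoid_mono_general A B hle hW₁
end

section
/- Let A be an n×n real matrix, B an n×m real matrix, Q a symmetric positive semidefinite n×n matrix, and R a symmetric positive definite m×m matrix. Define the Riccati update map Ric(P) = Q + AᵀPA − AᵀPB(R + BᵀPB)⁻¹BᵀPA on symmetric positive semidefinite matrices P (which is well defined since R + BᵀPB is positive definite). Then Ric is monotone with respect to the Loewner order: if 0 ⪯ P₂ ⪯ P₁, then Ric(P₂) ⪯ Ric(P₁). Moreover, for every positive semidefinite P, Ric(P) ⪯ Q + AᵀPA. -/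
open Matrix

/-- The one-step discrete-time Riccati update
`Ric(P) = Q + AᵀPA − AᵀPB(R + BᵀPB)⁻¹BᵀPA` of the finite-horizon LQR problem. -/
noncomputable def ricMap {n m : ℕ} (A : Matrix (Fin n) (Fin n) ℝ) (B : Matrix (Fin n) (Fin m) ℝ)
    (Q : Matrix (Fin n) (Fin n) ℝ) (R : Matrix (Fin m) (Fin m) ℝ)
    (P : Matrix (Fin n) (Fin n) ℝ) : Matrix (Fin n) (Fin n) ℝ :=
  Q + Aᵀ * P * A - Aᵀ * P * B * (R + Bᵀ * P * B)⁻¹ * (Bᵀ * P * A)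

/-! For Hermitian `P`, `Ric(P)` is the Schur complement of the top left block in
`[[R, 0], [0, Q]] + [B A]ᴴ P [B A]`, a block matrix that is affine and Loewner-increasing in `P`.
Schur complements are themselves Loewner-monotone: if `X` is the Schur complement of `M₂`, then
`M₂ - diag(0, X)` has Schur complement `0`, hence is positive semidefinite; so is
`M₁ - diag(0, X)` whenever `M₂ ⪯ M₁`, and its Schur complement is that of `M₁` minus `X`. -/

lemma fromBlocks_sub_fromBlocks {l m n o α : Type*} [AddGroup α]
    (A A' : Matrix n l α) (B B' : Matrix n m α) (C C' : Matrix o l α) (D D' : Matrix o m α) :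
    fromBlocks A B C D - fromBlocks A' B' C' D' =
      fromBlocks (A - A') (B - B') (C - C') (D - D') := by
  simp only [sub_eq_add_neg, fromBlocks_neg, fromBlocks_add]

lemma posSemidef_fromBlocks_conjTranspose_mul_mul {l m n R : Type*} [Finite l] [Finite m]
    [Fintype n] [Ring R] [PartialOrder R] [StarRing R] {P : Matrix n n R} (hP : P.PosSemidef)
    (B : Matrix n m R) (A : Matrix n l R) :
    (fromBlocks (Bᴴ * P * B) (Bᴴ * P * A) (Aᴴ * P * B) (Aᴴ * P * A)).PosSemidef := by
  simpa only [conjTranspose_fromCols_eq_fromRows_conjTranspose, fromRows_mul, mul_fromCols,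
    fromCols_fromRows_eq_fromBlocks] using hP.conjTranspose_mul_mul_same (fromCols B A)

lemma posDef_add_conjTranspose_mul_mul {m n α : Type*} [Finite m] [Fintype n] [Ring α]
    [PartialOrder α] [StarRing α] [AddLeftMono α] {R : Matrix m m α} {P : Matrix n n α}
    (hR : R.PosDef) (hP : P.PosSemidef) (B : Matrix n m α) : (R + Bᴴ * P * B).PosDef :=
  hR.add_posSemidef (hP.conjTranspose_mul_mul_same B)

section CommRing

variable {l m n α : Type*} [Fintype m] [DecidableEq m]
variable [CommRing α] [StarRing α]

/-- The Schur complement of the block `A` in the Hermitian block matrix `[[A, B], [Bᴴ, D]]`, which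
turns the Riccati update into a function of block matrices. It is meaningful for invertible `A`. -/
noncomputable def schurComplement (A : Matrix m m α) (B : Matrix m l α) (D : Matrix l l α) :
    Matrix l l α :=
  D - Bᴴ * A⁻¹ * B

/-- The Riccati update over a commutative ring with involution, with conjugate transposes in place
of the transposes of `ricMap`. The state cost `Q` may live on a different state space than `P`, as
happens in a time-varying system `x ↦ A x + B u`. -/
noncomputable def riccatiUpdate [Fintype n] (A : Matrix n l α) (B : Matrix n m α)
    (Q : Matrix l l α) (R : Matrix m m α) (P : Matrix n n α) : Matrix l l α :=
  Q + Aᴴ * P * A - Aᴴ * P * B * (R + Bᴴ * P * B)⁻¹ * (Bᴴ * P * A)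

lemma riccatiUpdate_eq_schurComplement [Fintype n] (A : Matrix n l α) (B : Matrix n m α)
    (Q : Matrix l l α) (R : Matrix m m α) {P : Matrix n n α} (hP : P.IsHermitian) :
    riccatiUpdate A B Q R P =
      schurComplement (R + Bᴴ * P * B) (Bᴴ * P * A) (Q + Aᴴ * P * A) := by
  have cross_conjTranspose : (Bᴴ * P * A)ᴴ = Aᴴ * P * B := by
    simp only [conjTranspose_mul, conjTranspose_conjTranspose, hP.eq, Matrix.mul_assoc]
  rw [riccatiUpdate, schurComplement, cross_conjTranspose]

variable [PartialOrder α] [Finite l]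

lemma posSemidef_sub_schurComplement {A : Matrix m m α} (hA : A.PosSemidef) (B : Matrix m l α)
    (D : Matrix l l α) : (D - schurComplement A B D).PosSemidef := by
  rw [schurComplement, sub_sub_cancel]
  exact hA.inv.conjTranspose_mul_mul_same B

end CommRing

section Field

variable {l m n K : Type*} [Fintype m] [DecidableEq m] [Finite l]
variable [Field K] [PartialOrder K] [StarRing K] [StarOrderedRing K]

lemma posSemidef_fromBlocks_iff_schurComplement {A : Matrix m m K} (hA : A.PosDef)
    (B : Matrix m l K) (D : Matrix l l K) :
    (fromBlocks A B Bᴴ D).PosSemidef ↔ (schurComplement A B D).PosSemidef :=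
  have : Invertible A := hA.isUnit.invertible
  hA.fromBlocks₁₁ B D

lemma posSemidef_schurComplement_sub_schurComplement {A₁ A₂ : Matrix m m K} {B₁ B₂ : Matrix m l K}
    {D₁ D₂ : Matrix l l K} (hA₂ : A₂.PosDef)
    (h : (fromBlocks A₁ B₁ B₁ᴴ D₁ - fromBlocks A₂ B₂ B₂ᴴ D₂).PosSemidef) :
    (schurComplement A₁ B₁ D₁ - schurComplement A₂ B₂ D₂).PosSemidef := by
  have hA₁ : A₁.PosDef := by
    have hA : (A₁ - A₂).PosSemidef := h.submatrix Sum.inl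
    simpa only [add_sub_cancel] using hA₂.add_posSemidef hA
  set X := schurComplement A₂ B₂ D₂ with hX
  have schur_sub (A : Matrix m m K) (B : Matrix m l K) (D : Matrix l l K) :
      schurComplement A B (D - X) = schurComplement A B D - X := sub_right_comm _ _ _
  have h₂ : (fromBlocks A₂ B₂ B₂ᴴ (D₂ - X)).PosSemidef := by
    rw [posSemidef_fromBlocks_iff_schurComplement hA₂, schur_sub, hX, sub_self]
    exact .zero
  have h₁ : (fromBlocks A₁ B₁ B₁ᴴ (D₁ - X)).PosSemidef := by
    convert h.add h₂ using 1
    simp only [fromBlocks_sub_fromBlocks, fromBlocks_add, sub_add_cancel, sub_add_sub_cancel]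
  rwa [posSemidef_fromBlocks_iff_schurComplement hA₁, schur_sub] at h₁

theorem ricMap_monotone_general [Fintype n] (A : Matrix n l K) (B : Matrix n m K)
    (Q : Matrix l l K) (R : Matrix m m K) {P₁ P₂ : Matrix n n K}
    (hP₂ : P₂.IsHermitian) (hS₂ : (R + Bᴴ * P₂ * B).PosDef) (h21 : (P₁ - P₂).PosSemidef) :
    (riccatiUpdate A B Q R P₁ - riccatiUpdate A B Q R P₂).PosSemidef ∧
      ∀ P : Matrix n n K, P.IsHermitian → (R + Bᴴ * P * B).PosDef →
        (Q + Aᴴ * P * A - riccatiUpdate A B Q R P).PosSemidef := by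
  have hP₁ : P₁.IsHermitian := by simpa using h21.isHermitian.add hP₂
  refine ⟨?_, fun P hP hS ↦ ?_⟩
  · rw [riccatiUpdate_eq_schurComplement A B Q R hP₁, riccatiUpdate_eq_schurComplement A B Q R hP₂]
    apply posSemidef_schurComplement_sub_schurComplement hS₂
    convert posSemidef_fromBlocks_conjTranspose_mul_mul h21 B A using 1
    simp only [fromBlocks_sub_fromBlocks, conjTranspose_mul, conjTranspose_conjTranspose, hP₁.eq,
      hP₂.eq, add_sub_add_left_eq_sub, Matrix.mul_sub, Matrix.sub_mul, Matrix.mul_assoc]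
  · rw [riccatiUpdate_eq_schurComplement A B Q R hP]
    exact posSemidef_sub_schurComplement hS.posSemidef _ _

end Field

lemma ricMap_eq_riccatiUpdate {n m : ℕ} (A : Matrix (Fin n) (Fin n) ℝ)
    (B : Matrix (Fin n) (Fin m) ℝ) (Q : Matrix (Fin n) (Fin n) ℝ) (R : Matrix (Fin m) (Fin m) ℝ)
    (P : Matrix (Fin n) (Fin n) ℝ) : ricMap A B Q R P = riccatiUpdate A B Q R P := by
  simp only [ricMap, riccatiUpdate, conjTranspose_eq_transpose_of_trivial]

/-- The Riccati update is monotone in the Loewner order: if `0 ⪯ P₂ ⪯ P₁` then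
`Ric(P₂) ⪯ Ric(P₁)`; moreover `Ric(P) ⪯ Q + AᵀPA` for every positive semidefinite `P`. -/
theorem ricMap_monotone {n m : ℕ}
    (A : Matrix (Fin n) (Fin n) ℝ) (B : Matrix (Fin n) (Fin m) ℝ)
    (Q : Matrix (Fin n) (Fin n) ℝ) (R : Matrix (Fin m) (Fin m) ℝ)
    (hQ : Q.PosSemidef) (hR : R.PosDef)
    (P₁ P₂ : Matrix (Fin n) (Fin n) ℝ)
    (hP₁ : P₁.PosSemidef) (hP₂ : P₂.PosSemidef) (h21 : (P₁ - P₂).PosSemidef) :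
    (ricMap A B Q R P₁ - ricMap A B Q R P₂).PosSemidef ∧
      ∀ P : Matrix (Fin n) (Fin n) ℝ, P.PosSemidef →
        (Q + Aᵀ * P * A - ricMap A B Q R P).PosSemidef := by
  simp only [ricMap_eq_riccatiUpdate, ← conjTranspose_eq_transpose_of_trivial]
  exact (ricMap_monotone_general A B Q R hP₂.isHermitian
    (posDef_add_conjTranspose_mul_mul hR hP₂ B) h21).imp_right
    fun le P hP ↦ le P hP.isHermitian (posDef_add_conjTranspose_mul_mul hR hP B)
end

section
/- Let σ₁, σ₂ be switching signals of length T with σ₁ ⪯ σ₂, and let P_{σ₁}(t), P_{σ₂}(t) be the solutions of the switched backward Riccati recursion with common terminal condition P_{σ₁}(T) = P_{σ₂}(T) = Q_f. Then P_{σ₂}(t) ⪯ P_{σ₁}(t) in the Loewner order for every t = 0, 1, …, T; in particular P_{σ₂}(0) ⪯ P_{σ₁}(0), so the optimal LQR cost x(0)ᵀP_σ(0)x(0) from any initial state x(0) is antitone in the partial order on switching signals. -/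
open Matrix

/-- One step of the switched backward Riccati recursion with switching value `s`:
`P ↦ Q + AᵀPA − s·AᵀPB(R + BᵀPB)⁻¹BᵀPA`. -/
noncomputable def ricStep {n m : ℕ} (A : Matrix (Fin n) (Fin n) ℝ) (B : Matrix (Fin n) (Fin m) ℝ)
    (Q : Matrix (Fin n) (Fin n) ℝ) (R : Matrix (Fin m) (Fin m) ℝ) (s : ℝ)
    (P : Matrix (Fin n) (Fin n) ℝ) : Matrix (Fin n) (Fin n) ℝ :=
  Q + Aᵀ * P * A - s • (Aᵀ * P * B * (R + Bᵀ * P * B)⁻¹ * (Bᵀ * P * A))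

/-- `ricBack A B Q R Qf T σ j` is the solution `P_σ(T − j)` of the switched backward Riccati
recursion with horizon `T`, switching signal `σ` and terminal condition `P_σ(T) = Q_f`;
it is indexed by the number `j` of backward steps, so `P_σ(t) = ricBack A B Q R Qf T σ (T − t)`. -/
noncomputable def ricBack {n m : ℕ} (A : Matrix (Fin n) (Fin n) ℝ) (B : Matrix (Fin n) (Fin m) ℝ)
    (Q : Matrix (Fin n) (Fin n) ℝ) (R : Matrix (Fin m) (Fin m) ℝ)
    (Qf : Matrix (Fin n) (Fin n) ℝ) (T : ℕ) (σ : ℕ → ℝ) : ℕ → Matrix (Fin n) (Fin n) ℝ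
  | 0 => Qf
  | j + 1 => ricStep A B Q R (σ (T - (j + 1))) (ricBack A B Q R Qf T σ j)

/-!
Read `P` as the quadratic cost-to-go `x ↦ xᵀPx`. A closed switch minimises over linear feedbacks:
completing the square in the gain `K` shows that `ricStep A B Q R 1 P` is the Loewner-least element
among the closed-loop updates `Q + (A + BK)ᵀP(A + BK) + KᵀRK`, while an open switch is the update
with `K = 0`. Each closed-loop update is monotone in `P`, hence so is their minimum, and the open
update dominates the closed one. As `ricStep` is affine in the switching value, it interpolates
between the two, so it is antitone in the switching value `s`, and monotone in `P` for `0 ≤ s ≤ 1`.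
Comparing two signals is then an induction on the number of backward steps.
-/

section CompleteSquare

variable {ι κ α : Type*} [Fintype κ] [DecidableEq κ] [CommRing α]

theorem complete_square_of_isSymm {S : Matrix κ κ α} (hS : S.IsSymm)
    (hdet : IsUnit S.det) (K X : Matrix κ ι α) :
    (K + S⁻¹ * X)ᵀ * S * (K + S⁻¹ * X) =
      Kᵀ * S * K + Kᵀ * X + Xᵀ * K + Xᵀ * S⁻¹ * X := by
  have hleft : (K + S⁻¹ * X)ᵀ * S = Kᵀ * S + Xᵀ := by
    rw [transpose_add, transpose_mul, transpose_nonsing_inv, hS.eq, Matrix.add_mul,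
      nonsing_inv_mul_cancel_right _ _ hdet]
  have hcross : Kᵀ * S * (S⁻¹ * X) = Kᵀ * X := by
    rw [Matrix.mul_assoc, mul_nonsing_inv_cancel_left _ _ hdet]
  rw [hleft, Matrix.mul_add, Matrix.add_mul, Matrix.add_mul, hcross, ← Matrix.mul_assoc Xᵀ]
  abel

end CompleteSquare

section ClosedLoop

variable {ι κ α : Type*} [Fintype ι] [Fintype κ] [CommRing α] {A : Matrix ι ι α}
  {B : Matrix ι κ α} {Q P : Matrix ι ι α} {R : Matrix κ κ α}

/-- The backward update of the cost-to-go matrix `P` under the linear feedback `u = Kx`: the matrix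
of the quadratic form `x ↦ xᵀQx + uᵀRu + (Ax + Bu)ᵀP(Ax + Bu)`. -/
def closedLoopStep (A : Matrix ι ι α) (B : Matrix ι κ α) (Q : Matrix ι ι α) (R : Matrix κ κ α)
    (K : Matrix κ ι α) (P : Matrix ι ι α) : Matrix ι ι α :=
  Q + (A + B * K)ᵀ * P * (A + B * K) + Kᵀ * R * K

/-- The LQR gain: when `R + BᵀPB` is positive definite, the `K` for which the feedback `u = Kx`
minimises the one-step cost-to-go. The sign convention is `u = Kx`, not `u = -Kx`, and a singular
`R + BᵀPB` gives the junk value `0`. -/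
noncomputable def lqrGain [DecidableEq κ] (A : Matrix ι ι α) (B : Matrix ι κ α) (R : Matrix κ κ α)
    (P : Matrix ι ι α) : Matrix κ ι α :=
  -((R + Bᵀ * P * B)⁻¹ * (Bᵀ * P * A))

theorem closedLoopStep_eq_add_square [DecidableEq κ] (hR : R.IsSymm) (hP : P.IsSymm)
    (hdet : IsUnit (R + Bᵀ * P * B).det) (K : Matrix κ ι α) :
    closedLoopStep A B Q R K P =
      Q + Aᵀ * P * A - Aᵀ * P * B * (R + Bᵀ * P * B)⁻¹ * (Bᵀ * P * A) +
        (K - lqrGain A B R P)ᵀ * (R + Bᵀ * P * B) * (K - lqrGain A B R P) := by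
  have hS : (R + Bᵀ * P * B).IsSymm := by
    simp only [IsSymm, transpose_add, transpose_mul, transpose_transpose, hR.eq, hP.eq,
      Matrix.mul_assoc]
  have hX : (Bᵀ * P * A)ᵀ = Aᵀ * P * B := by
    simp only [transpose_mul, transpose_transpose, hP.eq, Matrix.mul_assoc]
  have hexpand : closedLoopStep A B Q R K P =
      Q + Aᵀ * P * A +
        (Kᵀ * (R + Bᵀ * P * B) * K + Kᵀ * (Bᵀ * P * A) + Aᵀ * P * B * K) := by
    simp only [closedLoopStep, transpose_add, transpose_mul, Matrix.add_mul, Matrix.mul_add,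
      Matrix.mul_assoc]
    abel
  rw [hexpand, lqrGain, sub_neg_eq_add, complete_square_of_isSymm hS hdet, hX,
    ← Matrix.mul_assoc]
  abel

end ClosedLoop

open scoped MatrixOrder

section LoewnerOrder

variable {ι κ : Type*} [Fintype ι] {P : Matrix ι ι ℝ}

theorem transpose_mul_mul_mono [Finite κ] (C : Matrix ι κ ℝ) :
    Monotone fun P : Matrix ι ι ℝ => Cᵀ * P * C := fun P₁ P₂ hP => by
  rw [le_iff, ← Matrix.sub_mul, ← Matrix.mul_sub]
  exact (le_iff.1 hP).conjTranspose_mul_mul_same C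

theorem transpose_mul_mul_nonneg [Finite κ] (hP : 0 ≤ P) (C : Matrix ι κ ℝ) :
    0 ≤ Cᵀ * P * C :=
  (hP.posSemidef.conjTranspose_mul_mul_same C).nonneg

theorem posDef_add_transpose_mul_mul [Finite κ] {R : Matrix κ κ ℝ} (hR : R.PosDef) (hP : 0 ≤ P)
    (B : Matrix ι κ ℝ) : (R + Bᵀ * P * B).PosDef :=
  hR.add_posSemidef (transpose_mul_mul_nonneg hP B).posSemidef

variable [Fintype κ] {A : Matrix ι ι ℝ} {B : Matrix ι κ ℝ} {Q : Matrix ι ι ℝ} {R : Matrix κ κ ℝ}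

theorem closedLoopStep_mono (K : Matrix κ ι ℝ) : Monotone (closedLoopStep A B Q R K) :=
  fun _ _ hP => add_le_add_left (add_le_add_right (transpose_mul_mul_mono (A + B * K) hP) Q) _

theorem closedLoopStep_nonneg (hQ : 0 ≤ Q) (hR : 0 ≤ R) (hP : 0 ≤ P) (K : Matrix κ ι ℝ) :
    0 ≤ closedLoopStep A B Q R K P :=
  add_nonneg (add_nonneg hQ (transpose_mul_mul_nonneg hP _)) (transpose_mul_mul_nonneg hR K)

end LoewnerOrder

section RiccatiStep

variable {n m : ℕ} {A : Matrix (Fin n) (Fin n) ℝ} {B : Matrix (Fin n) (Fin m) ℝ}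
  {Q P P₁ P₂ : Matrix (Fin n) (Fin n) ℝ} {R : Matrix (Fin m) (Fin m) ℝ} {s : ℝ}

theorem ricStep_zero_eq_closedLoopStep_zero :
    ricStep A B Q R 0 P = closedLoopStep A B Q R 0 P := by
  simp [ricStep, closedLoopStep]

theorem closedLoopStep_eq_ricStep_one_add_square (hR : R.PosDef) (hP : 0 ≤ P)
    (K : Matrix (Fin m) (Fin n) ℝ) :
    closedLoopStep A B Q R K P = ricStep A B Q R 1 P +
      (K - lqrGain A B R P)ᵀ * (R + Bᵀ * P * B) * (K - lqrGain A B R P) := by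
  have hdet : IsUnit (R + Bᵀ * P * B).det :=
    (isUnit_iff_isUnit_det _).1 (posDef_add_transpose_mul_mul hR hP B).isUnit
  have hRsymm : R.IsSymm := isHermitian_iff_isSymm.1 hR.isHermitian
  have hPsymm : P.IsSymm := isHermitian_iff_isSymm.1 hP.posSemidef.isHermitian
  rw [closedLoopStep_eq_add_square hRsymm hPsymm hdet, ricStep, one_smul]

theorem ricStep_one_eq_closedLoopStep_lqrGain (hR : R.PosDef) (hP : 0 ≤ P) :
    ricStep A B Q R 1 P = closedLoopStep A B Q R (lqrGain A B R P) P := by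
  simp [closedLoopStep_eq_ricStep_one_add_square hR hP]

theorem ricStep_one_le_closedLoopStep (hR : R.PosDef) (hP : 0 ≤ P)
    (K : Matrix (Fin m) (Fin n) ℝ) : ricStep A B Q R 1 P ≤ closedLoopStep A B Q R K P := by
  rw [closedLoopStep_eq_ricStep_one_add_square hR hP]
  have hS : 0 ≤ R + Bᵀ * P * B := (posDef_add_transpose_mul_mul hR hP B).posSemidef.nonneg
  exact le_add_of_nonneg_right (transpose_mul_mul_nonneg hS _)

theorem ricStep_zero_mono : Monotone (ricStep A B Q R 0) := fun P₁ P₂ hP => by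
  simpa only [ricStep_zero_eq_closedLoopStep_zero] using closedLoopStep_mono 0 hP

theorem ricStep_one_mono (hR : R.PosDef) (hP₁ : 0 ≤ P₁) (hP : P₁ ≤ P₂) :
    ricStep A B Q R 1 P₁ ≤ ricStep A B Q R 1 P₂ :=
  calc
    ricStep A B Q R 1 P₁ ≤ closedLoopStep A B Q R (lqrGain A B R P₂) P₁ :=
      ricStep_one_le_closedLoopStep hR hP₁ _
    _ ≤ closedLoopStep A B Q R (lqrGain A B R P₂) P₂ := closedLoopStep_mono _ hP
    _ = ricStep A B Q R 1 P₂ := (ricStep_one_eq_closedLoopStep_lqrGain hR (hP₁.trans hP)).symm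

theorem ricStep_eq_lineMap (s : ℝ) :
    ricStep A B Q R s P = AffineMap.lineMap (ricStep A B Q R 0 P) (ricStep A B Q R 1 P) s := by
  simp only [ricStep, AffineMap.lineMap_apply_module]
  module

theorem ricStep_mono (hR : R.PosDef) (hs₀ : 0 ≤ s) (hs₁ : s ≤ 1) (hP₁ : 0 ≤ P₁) (hP : P₁ ≤ P₂) :
    ricStep A B Q R s P₁ ≤ ricStep A B Q R s P₂ := by
  rw [ricStep_eq_lineMap s, ricStep_eq_lineMap s]
  exact lineMap_mono_endpoints (ricStep_zero_mono hP) (ricStep_one_mono hR hP₁ hP) hs₀ hs₁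

theorem ricStep_antitone_switch (hR : R.PosDef) (hP : 0 ≤ P) :
    Antitone fun s => ricStep A B Q R s P := fun s₁ s₂ hs => by
  have h : ricStep A B Q R 1 P ≤ ricStep A B Q R 0 P :=
    ricStep_zero_eq_closedLoopStep_zero (R := R) ▸ ricStep_one_le_closedLoopStep hR hP 0
  simpa only [← ricStep_eq_lineMap] using AffineMap.lineMap_anti (k := ℝ) h hs

theorem ricStep_nonneg (hQ : 0 ≤ Q) (hR : R.PosDef) (hP : 0 ≤ P) (hs : s ≤ 1) :
    0 ≤ ricStep A B Q R s P :=
  calc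
    0 ≤ closedLoopStep A B Q R (lqrGain A B R P) P :=
      closedLoopStep_nonneg hQ hR.posSemidef.nonneg hP _
    _ = ricStep A B Q R 1 P := (ricStep_one_eq_closedLoopStep_lqrGain hR hP).symm
    _ ≤ ricStep A B Q R s P := ricStep_antitone_switch hR hP hs

end RiccatiStep

section RiccatiRecursion

variable {n m T : ℕ} {A : Matrix (Fin n) (Fin n) ℝ} {B : Matrix (Fin n) (Fin m) ℝ}
  {Q Qf : Matrix (Fin n) (Fin n) ℝ} {R : Matrix (Fin m) (Fin m) ℝ} {σ σ₁ σ₂ : ℕ → ℝ}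

theorem ricBack_nonneg (hQ : 0 ≤ Q) (hQf : 0 ≤ Qf) (hR : R.PosDef) (hσ : ∀ t < T, σ t ≤ 1) :
    ∀ j ≤ T, 0 ≤ ricBack A B Q R Qf T σ j
  | 0, _ => hQf
  | j + 1, hj =>
    ricStep_nonneg hQ hR (ricBack_nonneg hQ hQf hR hσ j (by lia)) (hσ _ (by lia))

theorem ricBack_antitone (hQ : 0 ≤ Q) (hQf : 0 ≤ Qf) (hR : R.PosDef)
    (hσ₁ : ∀ t < T, 0 ≤ σ₁ t) (hσ₂ : ∀ t < T, σ₂ t ≤ 1) (hle : ∀ t < T, σ₁ t ≤ σ₂ t) :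
    ∀ j ≤ T, ricBack A B Q R Qf T σ₂ j ≤ ricBack A B Q R Qf T σ₁ j
  | 0, _ => le_rfl
  | j + 1, hj => by
    have ht : T - (j + 1) < T := by lia
    have hP₂ : 0 ≤ ricBack A B Q R Qf T σ₂ j := ricBack_nonneg hQ hQf hR hσ₂ j (by lia)
    have ih : ricBack A B Q R Qf T σ₂ j ≤ ricBack A B Q R Qf T σ₁ j :=
      ricBack_antitone hQ hQf hR hσ₁ hσ₂ hle j (by lia)
    calc
      ricBack A B Q R Qf T σ₂ (j + 1)
        ≤ ricStep A B Q R (σ₁ (T - (j + 1))) (ricBack A B Q R Qf T σ₂ j) :=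
          ricStep_antitone_switch hR hP₂ (hle _ ht)
      _ ≤ ricBack A B Q R Qf T σ₁ (j + 1) :=
          ricStep_mono hR (hσ₁ _ ht) ((hle _ ht).trans (hσ₂ _ ht)) hP₂ ih

end RiccatiRecursion

theorem switched_riccati_antitone_general {n m T : ℕ}
    (A : Matrix (Fin n) (Fin n) ℝ) (B : Matrix (Fin n) (Fin m) ℝ)
    (Q Qf : Matrix (Fin n) (Fin n) ℝ) (R : Matrix (Fin m) (Fin m) ℝ)
    (hQ : Q.PosSemidef) (hQf : Qf.PosSemidef) (hR : R.PosDef)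
    (σ₁ σ₂ : ℕ → ℝ)
    (hσ₁ : ∀ t < T, 0 ≤ σ₁ t) (hσ₂ : ∀ t < T, σ₂ t ≤ 1)
    (hle : ∀ t < T, σ₁ t ≤ σ₂ t) :
    (∀ t ≤ T, (ricBack A B Q R Qf T σ₁ (T - t) - ricBack A B Q R Qf T σ₂ (T - t)).PosSemidef) ∧
      ∀ x : Fin n → ℝ,
        x ⬝ᵥ (ricBack A B Q R Qf T σ₂ T *ᵥ x) ≤ x ⬝ᵥ (ricBack A B Q R Qf T σ₁ T *ᵥ x) := by
  have hback : ∀ j ≤ T,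
      (ricBack A B Q R Qf T σ₁ j - ricBack A B Q R Qf T σ₂ j).PosSemidef :=
    ricBack_antitone hQ.nonneg hQf.nonneg hR hσ₁ hσ₂ hle
  refine ⟨fun t _ => hback _ (Nat.sub_le T t), fun x => ?_⟩
  simpa [sub_mulVec, dotProduct_sub] using (hback T le_rfl).dotProduct_mulVec_nonneg x

/-- If `σ₁ ⪯ σ₂`, then the solutions of the switched backward Riccati recursion with common
terminal condition `Q_f` satisfy `P_{σ₂}(t) ⪯ P_{σ₁}(t)` in the Loewner order for all
`t ≤ T`; in particular the optimal LQR cost `x(0)ᵀ P_σ(0) x(0)` is antitone in `σ`. -/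
theorem switched_riccati_antitone {n m T : ℕ}
    (A : Matrix (Fin n) (Fin n) ℝ) (B : Matrix (Fin n) (Fin m) ℝ)
    (Q Qf : Matrix (Fin n) (Fin n) ℝ) (R : Matrix (Fin m) (Fin m) ℝ)
    (hQ : Q.PosSemidef) (hQf : Qf.PosSemidef) (hR : R.PosDef)
    (σ₁ σ₂ : ℕ → ℝ)
    (hσ₁ : ∀ t < T, σ₁ t = 0 ∨ σ₁ t = 1) (hσ₂ : ∀ t < T, σ₂ t = 0 ∨ σ₂ t = 1)
    (hle : ∀ t < T, σ₁ t ≤ σ₂ t) :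
    (∀ t ≤ T, (ricBack A B Q R Qf T σ₁ (T - t) - ricBack A B Q R Qf T σ₂ (T - t)).PosSemidef) ∧
      ∀ x : Fin n → ℝ,
        x ⬝ᵥ (ricBack A B Q R Qf T σ₂ T *ᵥ x) ≤ x ⬝ᵥ (ricBack A B Q R Qf T σ₁ T *ᵥ x) :=
  switched_riccati_antitone_general A B Q Qf R hQ hQf hR σ₁ σ₂
    (fun t ht => (hσ₁ t ht).elim (fun h => h.ge) fun h => h ▸ zero_le_one)
    (fun t ht => (hσ₂ t ht).elim (fun h => h ▸ zero_le_one) fun h => h.le) hle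
end

section
/- Let K(0),…,K(T−1) be m×n real matrices and suppose that for every t and every symmetric positive semidefinite n×n matrix M, (A + BK(t))ᵀ M (A + BK(t)) ⪯ Aᵀ M A (the closed-loop maps do not expand any quadratic form more than A does). Let Q, Q_f be symmetric positive semidefinite n×n matrices and R a symmetric positive semidefinite m×m matrix. For a switching signal σ of length T and initial state x(0) = x₀, let x(t+1) = (A + σ(t)BK(t))x(t) and define the cost J_σ(x₀) = x(T)ᵀQ_f x(T) + Σ_{t=0}^{T−1} x(t)ᵀ(Q + K(t)ᵀRK(t))x(t). If σ₁ ⪯ σ₂, then J_{σ₂}(x₀) ≤ J_{σ₁}(x₀) for every x₀ ∈ ℝⁿ. (The degraded cost of a fixed feedback law under packet dropouts is antitone in the partial order on switching signals.) -/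
open Matrix

/-- The closed-loop state trajectory `x(0) = x₀`, `x(t+1) = (A + σ(t)·B K(t)) x(t)`
obtained by applying the fixed feedback law `u(t) = K(t)x(t)` through a dropout channel
with switching signal `σ`. -/
def traj {n m : ℕ} (A : Matrix (Fin n) (Fin n) ℝ) (B : Matrix (Fin n) (Fin m) ℝ)
    (K : ℕ → Matrix (Fin m) (Fin n) ℝ) (σ : ℕ → ℝ) (x₀ : Fin n → ℝ) : ℕ → Fin n → ℝ
  | 0 => x₀
  | t + 1 => (A + σ t • (B * K t)) *ᵥ traj A B K σ x₀ t

/-- The degraded LQR cost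
`J_σ(x₀) = x(T)ᵀ Q_f x(T) + Σ_{t=0}^{T-1} x(t)ᵀ (Q + K(t)ᵀ R K(t)) x(t)`
of the fixed feedback law `K` under the dropout signal `σ`. -/
def dropCost {n m : ℕ} (A : Matrix (Fin n) (Fin n) ℝ) (B : Matrix (Fin n) (Fin m) ℝ)
    (Q Qf : Matrix (Fin n) (Fin n) ℝ) (R : Matrix (Fin m) (Fin m) ℝ)
    (K : ℕ → Matrix (Fin m) (Fin n) ℝ) (T : ℕ) (σ : ℕ → ℝ) (x₀ : Fin n → ℝ) : ℝ :=
  traj A B K σ x₀ T ⬝ᵥ (Qf *ᵥ traj A B K σ x₀ T) +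
    ∑ t ∈ Finset.range T,
      traj A B K σ x₀ t ⬝ᵥ ((Q + (K t)ᵀ * R * K t) *ᵥ traj A B K σ x₀ t)

section QuadraticFormPreorder

variable {ι κ R : Type*} [Fintype ι] [Fintype κ] [Ring R] [StarRing R]

lemma star_mulVec_dotProduct_mulVec (M : Matrix κ κ R) (F : Matrix κ ι R) (x : ι → R) :
    star (F *ᵥ x) ⬝ᵥ (M *ᵥ (F *ᵥ x)) = star x ⬝ᵥ ((Fᴴ * M * F) *ᵥ x) := by
  rw [star_mulVec, ← dotProduct_mulVec, mulVec_mulVec, mulVec_mulVec, Matrix.mul_assoc]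

variable [PartialOrder R]

/-- The preorder on vectors in which `x` lies below `y` when no positive semidefinite quadratic
form is larger at `x` than at `y`. It is used to compare the states of two linear systems
at equal times. -/
def QuadFormLE (x y : ι → R) : Prop :=
  ∀ ⦃M : Matrix ι ι R⦄, M.PosSemidef → star x ⬝ᵥ (M *ᵥ x) ≤ star y ⬝ᵥ (M *ᵥ y)

lemma QuadFormLE.refl (x : ι → R) : QuadFormLE x x := fun _ _ => le_rfl

-- The hypothesis on `x` and `y` is applied to the pulled-back form `Fᴴ * M * F`, which is why
-- `QuadFormLE` has to quantify over all positive semidefinite forms.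
lemma QuadFormLE.mulVec [AddRightMono R] {F G : Matrix κ ι R} {x y : ι → R}
    (hxy : QuadFormLE x y)
    (hFG : ∀ M : Matrix κ κ R, M.PosSemidef → (Gᴴ * M * G - Fᴴ * M * F).PosSemidef) :
    QuadFormLE (F *ᵥ x) (G *ᵥ y) := by
  intro M hM
  have hy : star y ⬝ᵥ ((Fᴴ * M * F) *ᵥ y) ≤ star y ⬝ᵥ ((Gᴴ * M * G) *ᵥ y) := by
    simpa only [sub_mulVec, dotProduct_sub, sub_nonneg] using
      (hFG M hM).dotProduct_mulVec_nonneg y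
  calc star (F *ᵥ x) ⬝ᵥ (M *ᵥ (F *ᵥ x))
      = star x ⬝ᵥ ((Fᴴ * M * F) *ᵥ x) := star_mulVec_dotProduct_mulVec M F x
    _ ≤ star y ⬝ᵥ ((Fᴴ * M * F) *ᵥ y) := hxy (hM.conjTranspose_mul_mul_same F)
    _ ≤ star y ⬝ᵥ ((Gᴴ * M * G) *ᵥ y) := hy
    _ = star (G *ᵥ y) ⬝ᵥ (M *ᵥ (G *ᵥ y)) := (star_mulVec_dotProduct_mulVec M G y).symm

lemma QuadFormLE.of_recurrence [AddRightMono R] {F G : ℕ → Matrix ι ι R} {x y : ℕ → ι → R}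
    {T : ℕ} (hx : ∀ t < T, x (t + 1) = F t *ᵥ x t) (hy : ∀ t < T, y (t + 1) = G t *ᵥ y t)
    (hFG : ∀ t < T, ∀ M : Matrix ι ι R, M.PosSemidef →
      ((G t)ᴴ * M * G t - (F t)ᴴ * M * F t).PosSemidef)
    (h₀ : QuadFormLE (x 0) (y 0)) : ∀ t ≤ T, QuadFormLE (x t) (y t) := by
  intro t
  induction t with
  | zero => exact fun _ => h₀
  | succ t ih =>
    intro ht
    rw [hx t ht, hy t ht]
    exact (ih (Nat.le_of_succ_le ht)).mulVec (hFG t ht)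

end QuadraticFormPreorder

lemma posSemidef_sub_of_binary_le {ι κ R : Type*} [Fintype κ] [Ring R] [PartialOrder R]
    [StarRing R] [ZeroLEOneClass R] [NeZero (1 : R)] {C D : Matrix κ ι R} {M : Matrix κ κ R}
    {a b : R} (ha : a = 0 ∨ a = 1) (hb : b = 0 ∨ b = 1) (hab : a ≤ b)
    (hM : (Cᴴ * M * C - (C + D)ᴴ * M * (C + D)).PosSemidef) :
    ((C + a • D)ᴴ * M * (C + a • D) - (C + b • D)ᴴ * M * (C + b • D)).PosSemidef := by
  obtain rfl | hlt := hab.eq_or_lt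
  · simpa only [sub_self] using PosSemidef.zero
  · obtain ⟨rfl, rfl⟩ : a = 0 ∧ b = 1 := by
      rcases ha with rfl | rfl <;> rcases hb with rfl | rfl
      · exact absurd hlt (lt_irrefl _)
      · exact ⟨rfl, rfl⟩
      · exact absurd hlt zero_lt_one.not_gt
      · exact absurd hlt (lt_irrefl _)
    simpa only [zero_smul, add_zero, one_smul] using hM

theorem fixed_feedback_cost_antitone_general {n m T : ℕ}
    (A : Matrix (Fin n) (Fin n) ℝ) (B : Matrix (Fin n) (Fin m) ℝ)
    (Q Qf : Matrix (Fin n) (Fin n) ℝ) (R : Matrix (Fin m) (Fin m) ℝ)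
    (K : ℕ → Matrix (Fin m) (Fin n) ℝ)
    (hQR : ∀ t < T, (Q + (K t)ᵀ * R * K t).PosSemidef) (hQf : Qf.PosSemidef)
    (σ₁ σ₂ : ℕ → ℝ)
    (hσ : ∀ t < T, ∀ M : Matrix (Fin n) (Fin n) ℝ, M.PosSemidef →
      ((A + σ₁ t • (B * K t))ᵀ * M * (A + σ₁ t • (B * K t)) -
        (A + σ₂ t • (B * K t))ᵀ * M * (A + σ₂ t • (B * K t))).PosSemidef)
    (x₀ : Fin n → ℝ) :
    dropCost A B Q Qf R K T σ₂ x₀ ≤ dropCost A B Q Qf R K T σ₁ x₀ := by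
  have hstate : ∀ t ≤ T, QuadFormLE (traj A B K σ₂ x₀ t) (traj A B K σ₁ x₀ t) :=
    QuadFormLE.of_recurrence (fun _ _ => rfl) (fun _ _ => rfl) hσ (QuadFormLE.refl x₀)
  have hform : ∀ t ≤ T, ∀ M : Matrix (Fin n) (Fin n) ℝ, M.PosSemidef →
      traj A B K σ₂ x₀ t ⬝ᵥ (M *ᵥ traj A B K σ₂ x₀ t) ≤
        traj A B K σ₁ x₀ t ⬝ᵥ (M *ᵥ traj A B K σ₁ x₀ t) := fun t ht M hM => by
    simpa only [star_trivial] using hstate t ht hM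
  refine add_le_add (hform T le_rfl Qf hQf) (Finset.sum_le_sum fun t ht => ?_)
  have hlt := Finset.mem_range.mp ht
  exact hform t hlt.le _ (hQR t hlt)

/-- Suppose the closed-loop maps `A + B K(t)` do not expand any positive semidefinite
quadratic form more than `A` does. Then the degraded cost of the fixed feedback law under
packet dropouts is antitone in the partial order on switching signals: if `σ₁ ⪯ σ₂` then
`J_{σ₂}(x₀) ≤ J_{σ₁}(x₀)` for every initial state `x₀`. -/
theorem fixed_feedback_cost_antitone {n m T : ℕ}
    (A : Matrix (Fin n) (Fin n) ℝ) (B : Matrix (Fin n) (Fin m) ℝ)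
    (Q Qf : Matrix (Fin n) (Fin n) ℝ) (R : Matrix (Fin m) (Fin m) ℝ)
    (K : ℕ → Matrix (Fin m) (Fin n) ℝ)
    (hQ : Q.PosSemidef) (hQf : Qf.PosSemidef) (hR : R.PosSemidef)
    (hK : ∀ t < T, ∀ M : Matrix (Fin n) (Fin n) ℝ, M.PosSemidef →
      (Aᵀ * M * A - (A + B * K t)ᵀ * M * (A + B * K t)).PosSemidef)
    (σ₁ σ₂ : ℕ → ℝ)
    (hσ₁ : ∀ t < T, σ₁ t = 0 ∨ σ₁ t = 1) (hσ₂ : ∀ t < T, σ₂ t = 0 ∨ σ₂ t = 1)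
    (hle : ∀ t < T, σ₁ t ≤ σ₂ t) :
    ∀ x₀ : Fin n → ℝ,
      dropCost A B Q Qf R K T σ₂ x₀ ≤ dropCost A B Q Qf R K T σ₁ x₀ :=
  fixed_feedback_cost_antitone_general A B Q Qf R K
    (fun t _ => hQ.add (hR.conjTranspose_mul_mul_same (K t))) hQf σ₁ σ₂
    fun t ht M hM => posSemidef_sub_of_binary_le (hσ₁ t ht) (hσ₂ t ht) (hle t ht) (hK t ht M hM)
end

section
/- Fix k ≥ 1 and T ∈ ℕ, and consider the constraint of at most k consecutive dropouts. A binary signal σ : {0,…,T−1} → {0,1} is minimal if and only if σ is admissible and every index i with σ(i) = 1 is surrounded by at least k zeros, i.e., p(i) + q(i) ≥ k, where p(i) is the number of consecutive indices immediately preceding i on which σ is 0 and q(i) is the number of consecutive indices immediately following i on which σ is 0. -/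
/-- A binary signal `σ` of length `T` is admissible for the constraint of at most `k`
consecutive dropouts if every block of `k+1` consecutive indices in `{0,…,T−1}` contains
an index where `σ` is `1` (i.e. there is no block of `k+1` consecutive zeros). -/
def IsAdmissible (k T : ℕ) (σ : Fin T → Bool) : Prop :=
  ∀ i : ℕ, (h : i + k < T) → ∃ j : ℕ, ∃ hj : j ≤ k, σ ⟨i + j, by omega⟩ = true

/-- A signal `σ` is minimal if it is admissible and no admissible signal `σ' ≠ σ` satisfies
`σ' ⪯ σ` (where `σ' ⪯ σ` means `σ'(i) = 1` implies `σ(i) = 1` for all `i`). -/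
def IsMinimal (k T : ℕ) (σ : Fin T → Bool) : Prop :=
  IsAdmissible k T σ ∧
    ∀ σ' : Fin T → Bool, IsAdmissible k T σ' → (∀ i, σ' i = true → σ i = true) → σ' = σ

/-- A `1`-bit at index `i` of `σ` is surrounded by at least `k` zeros: there are `p`
consecutive zeros immediately preceding `i` and `q` consecutive zeros immediately following
`i` with `p + q ≥ k`; equivalently `p(i) + q(i) ≥ k` for the maximal such runs. -/
def SurroundedBy (k T : ℕ) (σ : Fin T → Bool) (i : Fin T) : Prop :=
  ∃ p q : ℕ, k ≤ p + q ∧ p ≤ (i : ℕ) ∧ ∃ _h : (i : ℕ) + q < T,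
    (∀ j : ℕ, 1 ≤ j → j ≤ p → σ ⟨(i : ℕ) - j, by omega⟩ = false) ∧
    (∀ j : ℕ, (h1 : 1 ≤ j) → (h2 : j ≤ q) → σ ⟨(i : ℕ) + j, by omega⟩ = false)

/-!
Admissibility is preserved by turning zeros into ones, so a signal is minimal exactly when it is
admissible and clearing any single one destroys admissibility. Clearing a one of an admissible
signal can only create a block of `k + 1` zeros through the cleared index, and such a block is a
run of `p` zeros before the index and a run of `q` zeros after it with `p + q = k`.
-/

theorem minimal_iff_forall_not_update_false {ι : Type*} [DecidableEq ι] {P : (ι → Bool) → Prop}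
    (hP : Monotone P) {σ : ι → Bool} :
    Minimal P σ ↔ P σ ∧ ∀ i, σ i = true → ¬ P (Function.update σ i false) := by
  refine ⟨fun h ↦ ⟨h.prop, fun i hi hupdate ↦ ?_⟩, fun ⟨hσ, hclear⟩ ↦ ⟨hσ, fun τ hτ hle i ↦ ?_⟩⟩
  · have hge : σ ≤ Function.update σ i false :=
      h.le_of_le hupdate (update_le_self_iff.2 (Bool.false_le _))
    simpa using Bool.le_iff_imp.1 (hge i) hi
  · by_contra hlt
    obtain ⟨hτi, hσi⟩ : τ i = false ∧ σ i = true := Bool.lt_iff.1 (not_le.1 hlt)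
    have hτ_le : τ ≤ Function.update σ i false :=
      le_update_iff.2 ⟨hτi.le, fun j _ ↦ hle j⟩
    exact hclear i hσi (hP hτ_le hτ)

section Signal

variable {k T : ℕ} {σ : Fin T → Bool} {i : Fin T}

theorem isMinimal_iff_minimal : IsMinimal k T σ ↔ Minimal (IsAdmissible k T) σ := by
  simp only [IsMinimal, minimal_iff, Pi.le_def, Bool.le_iff_imp, eq_comm]

theorem isAdmissible_iff_forall_exists_mem_Icc :
    IsAdmissible k T σ ↔
      ∀ a, a + k < T → ∃ m : Fin T, (m : ℕ) ∈ Set.Icc a (a + k) ∧ σ m = true := by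
  refine forall₂_congr fun a ha ↦ ⟨fun ⟨j, hj, hσ⟩ ↦ ⟨_, ⟨by simp, by simpa⟩, hσ⟩, ?_⟩
  rintro ⟨m, ⟨ham, hma⟩, hσ⟩
  refine ⟨m - a, by omega, ?_⟩
  simpa only [Nat.add_sub_cancel' ham] using hσ

theorem monotone_isAdmissible : Monotone (IsAdmissible k T) := by
  intro σ τ hle hσ a ha
  obtain ⟨j, hj, hσj⟩ := hσ a ha
  exact ⟨j, hj, Bool.le_iff_imp.1 (hle _) hσj⟩

theorem surroundedBy_iff_exists_Icc :
    SurroundedBy k T σ i ↔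
      ∃ a, a + k < T ∧ (i : ℕ) ∈ Set.Icc a (a + k) ∧
        ∀ m : Fin T, (m : ℕ) ∈ Set.Icc a (a + k) → m ≠ i → σ m = false := by
  constructor
  · rintro ⟨p, q, hpq, hp, hq, hbefore, hafter⟩
    -- When `k < p` the last `k` of the `p` zeros suffice.
    refine ⟨i - min p k, by omega, ⟨by omega, by omega⟩, fun m ⟨ham, hma⟩ hmi ↦ ?_⟩
    rcases lt_or_gt_of_ne hmi with hlt | hgt
    · have hzero := hbefore (i - m) (by omega) (by omega)
      simpa only [Nat.sub_sub_self (Fin.le_def.1 hlt.le)] using hzero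
    · have hzero := hafter (m - i) (by omega) (by omega)
      simpa only [Nat.add_sub_cancel' (Fin.le_def.1 hgt.le)] using hzero
  · rintro ⟨a, haT, ⟨hai, hia⟩, hzero⟩
    refine ⟨i - a, a + k - i, by omega, by omega, by omega, fun j hj hja ↦ ?_, fun j hj hja ↦ ?_⟩
    · exact hzero _ ⟨by grind, by grind⟩ (by grind)
    · exact hzero _ ⟨by grind, by grind⟩ (by grind)

theorem not_isAdmissible_update_false_iff :
    ¬ IsAdmissible k T (Function.update σ i false) ↔
      ∃ a, a + k < T ∧ ∀ m : Fin T, (m : ℕ) ∈ Set.Icc a (a + k) → m ≠ i → σ m = false := by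
  simp [isAdmissible_iff_forall_exists_mem_Icc, Function.update_apply]

theorem IsAdmissible.not_update_false_iff_surroundedBy (hσ : IsAdmissible k T σ) :
    ¬ IsAdmissible k T (Function.update σ i false) ↔ SurroundedBy k T σ i := by
  rw [not_isAdmissible_update_false_iff, surroundedBy_iff_exists_Icc]
  refine exists_congr fun a ↦ and_congr_right fun ha ↦ (and_iff_right_of_imp fun hzero ↦ ?_).symm
  obtain ⟨m, hm, hσm⟩ := isAdmissible_iff_forall_exists_mem_Icc.1 hσ a ha
  obtain rfl : m = i := by
    by_contra hmi
    simp [hzero m hm hmi] at hσm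
  exact hm

end Signal

/-- For the constraint of at most `k ≥ 1` consecutive dropouts, a binary signal of length `T`
is minimal if and only if it is admissible and every index `i` with `σ(i) = 1` is surrounded
by at least `k` zeros, i.e. `p(i) + q(i) ≥ k`. -/
theorem isMinimal_iff_surrounded (k T : ℕ) (hk : 1 ≤ k) (σ : Fin T → Bool) :
    IsMinimal k T σ ↔
      IsAdmissible k T σ ∧ ∀ i : Fin T, σ i = true → SurroundedBy k T σ i := by
  rw [isMinimal_iff_minimal, minimal_iff_forall_not_update_false monotone_isAdmissible]
  exact and_congr_right fun hσ ↦ forall₂_congr fun _ _ ↦ hσ.not_update_false_iff_surroundedBy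
end
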